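/- Fix δ ≥ 0, a symbol a of order 0, the bump β, and α ∈ (−1,1)∖{0}. For j ≥ 1, r₁, r₂ > 0 and θ₁, θ₂ ∈ [0,2π) set ψ₃(s) = (2^{−j}+d_s)^{−3/2−δ} a(2^j d_s) · [sin(θ₁−θ₂+π) cosh(αs)] / [cosh s − cos(θ₁−θ₂+π)], ψ_{3,m}(s) = (r₁+r₂)^{−3/2−δ} a(2^j(r₁+r₂)) · sin(θ₁−θ₂+π) / (s²/2 + 2 sin²((θ₁−θ₂+π)/2)), and ψ_{3,e} = ψ₃ − ψ_{3,m}, and define K̃^{3,j}_{D,e}(r₁,r₂;θ₁−θ₂) = 2^{−j(3/2+δ)} β(r₁+r₂) ∫₀^∞ e^{i 2^j d_s} ψ_{3,e}(s) ds. Then there is a constant C, independent of j, r₁, r₂, θ₁, θ₂, such that |K̃^{3,j}_{D,e}(r₁,r₂;θ₁−θ₂)| ≤ C 2^{−j(3/2+δ)} (1 + 2^j r₁ r₂)^{−1/2} for all j ≥ 1. -/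

import Mathlib

open MeasureTheory Real Set

noncomputable section

/-- `d_s(r₁, r₂) = √(r₁² + r₂² + 2 r₁ r₂ cosh s)`. -/
def dS (r₁ r₂ s : ℝ) : ℝ := Real.sqrt (r₁ ^ 2 + r₂ ^ 2 + 2 * r₁ * r₂ * Real.cosh s)

/-- A symbol of order `0` on `(0, ∞)`. -/
def IsSymbol0 (a : ℝ → ℂ) : Prop :=
  ContDiffOn ℝ (⊤ : ℕ∞) a (Set.Ioi 0) ∧ (∃ M : ℝ, ∀ r > (0 : ℝ), ‖a r‖ ≤ M) ∧
    ∀ N : ℕ, ∃ C : ℝ, ∀ r > (0 : ℝ),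
      ‖iteratedDerivWithin N a (Set.Ioi 0) r‖ ≤ C * r ^ (-(N : ℝ))

/-- `ψ₃(s)`, with `φ = θ₁ - θ₂`. -/
def psi3 (δ α : ℝ) (a : ℝ → ℂ) (j : ℕ) (r₁ r₂ φ s : ℝ) : ℂ :=
  ((((2 : ℝ) ^ (-(j : ℝ)) + dS r₁ r₂ s) ^ (-(3 / 2 + δ)) : ℝ) : ℂ) *
    a ((2 : ℝ) ^ (j : ℝ) * dS r₁ r₂ s) *
    ((Real.sin (φ + Real.pi) * Real.cosh (α * s) /
        (Real.cosh s - Real.cos (φ + Real.pi)) : ℝ) : ℂ)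

/-- `ψ_{3,m}(s)`, with `φ = θ₁ - θ₂`. -/
def psi3m (δ : ℝ) (a : ℝ → ℂ) (j : ℕ) (r₁ r₂ φ s : ℝ) : ℂ :=
  (((r₁ + r₂) ^ (-(3 / 2 + δ)) : ℝ) : ℂ) * a ((2 : ℝ) ^ (j : ℝ) * (r₁ + r₂)) *
    ((Real.sin (φ + Real.pi) /
        (s ^ 2 / 2 + 2 * Real.sin ((φ + Real.pi) / 2) ^ 2) : ℝ) : ℂ)

/-- The kernel `K̃^{3,j}_{D,e}` built from `ψ_{3,e} = ψ₃ - ψ_{3,m}`. -/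
def Ktil3e (δ α : ℝ) (a : ℝ → ℂ) (β : ℝ → ℝ) (j : ℕ) (r₁ r₂ φ : ℝ) : ℂ :=
  (((2 : ℝ) ^ (-(j : ℝ) * (3 / 2 + δ)) : ℝ) : ℂ) * ((β (r₁ + r₂) : ℝ) : ℂ) *
    ∫ s in Set.Ioi (0 : ℝ),
      Complex.exp (Complex.I * (((2 : ℝ) ^ (j : ℝ) * dS r₁ r₂ s : ℝ) : ℂ)) *
        (psi3 δ α a j r₁ r₂ φ s - psi3m δ a j r₁ r₂ φ s)

/-! ### elementary hyperbolic bounds -/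

lemma aux_taylor {s : ℝ} (h0 : 0 ≤ s) (h1 : s ≤ 1) :
    Real.cosh s - 1 - s ^ 2 / 2 ≤ s ^ 4 ∧ Real.cosh s - 1 ≤ s ^ 2 ∧ Real.cosh s ≤ 2 ∧
    Real.sinh s ≤ 2 * s ∧ Real.sinh s - s ≤ s ^ 3 := by
  have e1 := Real.exp_bound (x := s) (by rw [abs_of_nonneg h0]; exact h1) (n := 4) (by norm_num)
  have e2 := Real.exp_bound (x := -s) (by rw [abs_neg, abs_of_nonneg h0]; exact h1)
    (n := 4) (by norm_num)
  rw [abs_neg] at e2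
  rw [abs_of_nonneg h0] at e1 e2
  simp only [Finset.sum_range_succ, Finset.sum_range_zero, Nat.factorial] at e1 e2
  norm_num at e1 e2
  rw [abs_le] at e1 e2
  rw [Real.cosh_eq, Real.sinh_eq]
  have q2 : s ^ 2 ≤ s := by nlinarith
  have q3 : s ^ 3 ≤ s ^ 2 := by nlinarith [sq_nonneg s]
  have q4 : s ^ 4 ≤ s ^ 3 := by nlinarith [pow_nonneg h0 3]
  have p4 : 0 ≤ s ^ 4 := by positivity
  have p3 : 0 ≤ s ^ 3 := by positivity
  have en : (-s) ^ 3 = - s ^ 3 := by ring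
  rw [en] at e2
  obtain ⟨a1, a2⟩ := e1
  obtain ⟨a3, a4⟩ := e2
  refine ⟨?_, ?_, ?_, ?_, ?_⟩ <;> linarith

lemma aux_cosh_lower (s : ℝ) : s ^ 2 / 2 ≤ Real.cosh s - 1 := by
  have h : Real.cosh s = 1 + 2 * Real.sinh (s / 2) ^ 2 := by
    have e := Real.cosh_two_mul (s / 2)
    have e2 := Real.cosh_sq (s / 2)
    rw [mul_div_cancel₀ s two_ne_zero] at e
    linarith
  have h2 : (s / 2) ^ 2 ≤ Real.sinh (s / 2) ^ 2 := by
    apply sq_le_sq.2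
    rw [Real.abs_sinh]
    exact Real.self_le_sinh_iff.2 (abs_nonneg _)
  nlinarith

lemma aux_decay {α : ℝ} (hα : α ∈ Set.Ioo (-1 : ℝ) 1) :
    ∃ C : ℝ, 0 < C ∧ ∀ s : ℝ, 1 ≤ s →
      Real.cosh (α * s) ≤ C * (Real.cosh s - 1) / (1 + s ^ 2) := by
  have hc : |α| < 1 := abs_lt.2 hα
  set c := 1 - |α| with hcdef
  have hc0 : 0 < c := by linarith
  refine ⟨32 / c ^ 2, by positivity, fun s hs => ?_⟩
  have s0 : 0 < s := by linarith
  rw [le_div_iff₀ (by positivity)]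
  have h1 : Real.cosh (α * s) ≤ Real.exp (|α| * s) := by
    rw [← Real.cosh_abs, abs_mul, abs_of_pos s0, Real.cosh_eq]
    have : Real.exp (-(|α| * s)) ≤ Real.exp (|α| * s) :=
      Real.exp_le_exp.2 (by have := mul_nonneg (abs_nonneg α) s0.le; linarith)
    linarith
  have h2 : Real.exp (|α| * s) * Real.exp (c * s) = Real.exp s := by
    rw [← Real.exp_add]; congr 1; rw [hcdef]; ring
  have h3 : c ^ 2 * s ^ 2 / 2 ≤ Real.exp (c * s) := by
    have := Real.quadratic_le_exp_of_nonneg (x := c * s) (by positivity)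
    nlinarith [mul_pos hc0 s0]
  have h4 : Real.exp s / 8 ≤ Real.cosh s - 1 := by
    rw [Real.cosh_eq]
    have a1 := Real.exp_one_gt_d9
    have a2 : Real.exp 1 ≤ Real.exp s := Real.exp_le_exp.2 hs
    have a3 := Real.exp_pos (-s)
    linarith
  have h5 : Real.exp (|α| * s) * (c ^ 2 * s ^ 2 / 2) ≤ Real.exp s := by
    rw [← h2]; gcongr
  have h6 : 1 + s ^ 2 ≤ 2 * s ^ 2 := by nlinarith
  calc Real.cosh (α * s) * (1 + s ^ 2) ≤ Real.exp (|α| * s) * (2 * s ^ 2) := by gcongr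
    _ = 4 / c ^ 2 * (Real.exp (|α| * s) * (c ^ 2 * s ^ 2 / 2)) := by field_simp; ring
    _ ≤ 4 / c ^ 2 * Real.exp s := by gcongr
    _ = 32 / c ^ 2 * (Real.exp s / 8) := by ring
    _ ≤ _ := by gcongr

/-! ### the distance function -/

lemma dS_sq {r₁ r₂ : ℝ} (h1 : 0 < r₁) (h2 : 0 < r₂) (s : ℝ) :
    dS r₁ r₂ s ^ 2 = r₁ ^ 2 + r₂ ^ 2 + 2 * r₁ * r₂ * Real.cosh s := by
  unfold dS
  have := Real.cosh_pos s
  exact Real.sq_sqrt (by positivity)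

lemma dS_ge {r₁ r₂ : ℝ} (h1 : 0 < r₁) (h2 : 0 < r₂) (s : ℝ) : r₁ + r₂ ≤ dS r₁ r₂ s := by
  unfold dS
  apply Real.le_sqrt_of_sq_le
  nlinarith [Real.one_le_cosh s, mul_pos h1 h2]

lemma dS_hasDeriv {r₁ r₂ : ℝ} (h1 : 0 < r₁) (h2 : 0 < r₂) (s : ℝ) :
    HasDerivAt (dS r₁ r₂) (r₁ * r₂ * Real.sinh s / dS r₁ r₂ s) s := by
  have hc := Real.cosh_pos s
  have h := (((Real.hasDerivAt_cosh s).const_mul (2 * r₁ * r₂)).const_add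
    (r₁ ^ 2 + r₂ ^ 2)).sqrt (by positivity)
  have hd : 0 < dS r₁ r₂ s := by have := dS_ge h1 h2 s; linarith
  refine h.congr_deriv ?_
  change 2 * r₁ * r₂ * Real.sinh s / (2 * dS r₁ r₂ s) = _
  field_simp

lemma dS_cont (r₁ r₂ : ℝ) : Continuous (dS r₁ r₂) := by
  unfold dS
  fun_prop

lemma aux_prod {r₁ r₂ : ℝ} : r₁ * r₂ ≤ (r₁ + r₂) ^ 2 / 4 := by
  nlinarith [sq_nonneg (r₁ - r₂)]

lemma dS_sub {r₁ r₂ : ℝ} (h1 : 0 < r₁) (h2 : 0 < r₂) (hR : r₁ + r₂ ≤ 4 / 3) (s : ℝ) :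
    dS r₁ r₂ s - (r₁ + r₂) ≤ (Real.cosh s - 1) / 3 := by
  have hd := dS_ge h1 h2 s
  have hsq := dS_sq h1 h2 s
  have hc := Real.one_le_cosh s
  set d := dS r₁ r₂ s
  have hp := @aux_prod r₁ r₂
  have e : (d - (r₁ + r₂)) * (d + (r₁ + r₂)) = 2 * (r₁ * r₂) * (Real.cosh s - 1) := by
    nlinarith
  have e1 : (d - (r₁ + r₂)) * (2 * (r₁ + r₂)) ≤ (d - (r₁ + r₂)) * (d + (r₁ + r₂)) := by
    apply mul_le_mul_of_nonneg_left <;> linarith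
  have e2 : 2 * (r₁ * r₂) * (Real.cosh s - 1) ≤ 2 * ((r₁ + r₂) ^ 2 / 4) * (Real.cosh s - 1) := by
    apply mul_le_mul_of_nonneg_right <;> linarith
  have e3 : (2 * (r₁ + r₂)) * (d - (r₁ + r₂)) ≤
      (2 * (r₁ + r₂)) * ((r₁ + r₂) / 4 * (Real.cosh s - 1)) := by nlinarith
  have e4 := le_of_mul_le_mul_left e3 (by linarith)
  nlinarith

lemma dS_deriv_le {r₁ r₂ : ℝ} (h1 : 0 < r₁) (h2 : 0 < r₂) (hR : r₁ + r₂ ≤ 4 / 3)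
    {s : ℝ} (hs : 0 ≤ s) :
    0 ≤ r₁ * r₂ * Real.sinh s / dS r₁ r₂ s ∧
    r₁ * r₂ * Real.sinh s / dS r₁ r₂ s ≤ dS r₁ r₂ s / 2 ∧
    r₁ * r₂ * Real.sinh s / dS r₁ r₂ s ≤ Real.sinh s / 3 := by
  have hd := dS_ge h1 h2 s
  have hsq := dS_sq h1 h2 s
  have hsh : 0 ≤ Real.sinh s := Real.sinh_nonneg_iff.2 hs
  have hlt := Real.sinh_lt_cosh s
  set d := dS r₁ r₂ s
  have hp := @aux_prod r₁ r₂
  have hd0 : 0 < d := by linarith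
  have hpp := mul_pos h1 h2
  refine ⟨by positivity, ?_, ?_⟩
  · rw [div_le_iff₀ hd0]
    nlinarith
  · rw [div_le_iff₀ hd0]
    have : r₁ * r₂ ≤ d / 3 := by nlinarith
    nlinarith

lemma dS_exp {r₁ r₂ : ℝ} (h1 : 0 < r₁) (h2 : 0 < r₂) {s : ℝ} (hs : 0 ≤ s) :
    dS r₁ r₂ s ≤ (r₁ + r₂) * Real.exp (s / 2) := by
  unfold dS
  apply Real.sqrt_le_iff.2
  refine ⟨by positivity, ?_⟩
  have e : Real.exp (s / 2) ^ 2 = Real.exp s := by rw [← Real.exp_nat_mul]; congr 1; push_cast; ring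
  rw [mul_pow, e]
  have a : Real.cosh s ≤ Real.exp s := by
    rw [Real.cosh_eq]
    have : Real.exp (-s) ≤ Real.exp s := Real.exp_le_exp.2 (by linarith)
    linarith
  have b : 1 ≤ Real.exp s := Real.one_le_exp hs
  nlinarith [mul_pos h1 h2, sq_nonneg r₁, sq_nonneg r₂]

/-- `w = d_s / sinh s` satisfies `w ≤ (8/3)/s`. -/
lemma w_le {r₁ r₂ : ℝ} (h1 : 0 < r₁) (h2 : 0 < r₂) (hR : r₁ + r₂ ≤ 4 / 3)
    {s : ℝ} (hs : 0 < s) : dS r₁ r₂ s / Real.sinh s ≤ 3 / s := by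
  have hsh : 0 < Real.sinh s := Real.sinh_pos_iff.2 hs
  rw [div_le_div_iff₀ hsh hs]
  have h := dS_exp h1 h2 hs.le
  have e : Real.sinh s = 2 * Real.sinh (s / 2) * Real.cosh (s / 2) := by
    rw [← Real.sinh_two_mul]; congr 1; ring
  have a : s / 2 ≤ Real.sinh (s / 2) := Real.self_le_sinh_iff.2 (by linarith)
  have b : Real.exp (s / 2) / 2 ≤ Real.cosh (s / 2) := by
    rw [Real.cosh_eq]; have := Real.exp_pos (-(s / 2)); linarith
  have hE := Real.exp_pos (s / 2)
  have c : s / 2 * (Real.exp (s / 2) / 2) ≤ Real.sinh (s / 2) * Real.cosh (s / 2) := by gcongr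
  have d : dS r₁ r₂ s * s ≤ 4 / 3 * Real.exp (s / 2) * s := by
    gcongr
    refine h.trans ?_
    gcongr
  have : 0 < Real.exp (s / 2) * s := by positivity
  nlinarith

lemma w_hasDeriv {r₁ r₂ : ℝ} (h1 : 0 < r₁) (h2 : 0 < r₂) {s : ℝ} (hs : 0 < s) :
    HasDerivAt (fun s => dS r₁ r₂ s / Real.sinh s)
      ((r₁ * r₂ * Real.sinh s / dS r₁ r₂ s * Real.sinh s - dS r₁ r₂ s * Real.cosh s) /
        Real.sinh s ^ 2) s :=
  (dS_hasDeriv h1 h2 s).div (Real.hasDerivAt_sinh s) (Real.sinh_pos_iff.2 hs).ne'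

lemma w_deriv_le {r₁ r₂ : ℝ} (h1 : 0 < r₁) (h2 : 0 < r₂) (hR : r₁ + r₂ ≤ 4 / 3)
    {s : ℝ} (hs : 0 < s) :
    |(r₁ * r₂ * Real.sinh s / dS r₁ r₂ s * Real.sinh s - dS r₁ r₂ s * Real.cosh s) /
        Real.sinh s ^ 2| ≤ 3 / s * (3 / 2 + 1 / s) := by
  have hsh : 0 < Real.sinh s := Real.sinh_pos_iff.2 hs
  obtain ⟨a1, a2, -⟩ := dS_deriv_le h1 h2 hR hs.le
  have hw := w_le h1 h2 hR hs
  set D := r₁ * r₂ * Real.sinh s / dS r₁ r₂ s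
  have hd : 0 < dS r₁ r₂ s := by have := dS_ge h1 h2 s; linarith
  set d := dS r₁ r₂ s
  have hcoth : Real.cosh s / Real.sinh s ≤ 1 + 1 / s := by
    rw [div_le_iff₀ hsh]
    have e := Real.cosh_sub_sinh s
    have e1 : Real.exp (-s) ≤ 1 := Real.exp_le_one_iff.2 (by linarith)
    have e2 : 1 ≤ 1 / s * Real.sinh s := by
      rw [one_div_mul_eq_div, le_div_iff₀ hs, one_mul]
      exact Real.self_le_sinh_iff.2 hs.le
    nlinarith
  have hw0 : 0 < d / Real.sinh s := by positivity
  have hco : 0 < Real.cosh s / Real.sinh s := div_pos (Real.cosh_pos s) hsh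
  have e : (D * Real.sinh s - d * Real.cosh s) / Real.sinh s ^ 2 =
      D / Real.sinh s - d / Real.sinh s * (Real.cosh s / Real.sinh s) := by
    field_simp
  have b1 : D / Real.sinh s ≤ d / Real.sinh s / 2 := by
    have e : d / Real.sinh s / 2 = d / 2 / Real.sinh s := div_right_comm _ _ _
    rw [e]
    exact div_le_div_of_nonneg_right a2 hsh.le
  have b0 : 0 ≤ D / Real.sinh s := by positivity
  have b2 : d / Real.sinh s * (3 / 2 + 1 / s) ≤ 3 / s * (3 / 2 + 1 / s) := by gcongr
  have b3 : d / Real.sinh s * (Real.cosh s / Real.sinh s) ≤ d / Real.sinh s * (1 + 1 / s) := by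
    gcongr
  have b4 : 0 < d / Real.sinh s * (Real.cosh s / Real.sinh s) := by positivity
  rw [e, abs_le]
  constructor <;> nlinarith

/-! ### the oscillatory integral estimate -/

lemma vdc {r₁ r₂ : ℝ} (h1 : 0 < r₁) (h2 : 0 < r₂) (hR : r₁ + r₂ ≤ 4 / 3)
    {lam : ℝ} (hlam : 0 < lam) (ψ ψ' : ℝ → ℂ) {K : ℝ}
    (hψ : ∀ s > (0 : ℝ), HasDerivAt ψ (ψ' s) s)
    (hb : ∀ s > (0 : ℝ), ‖ψ s‖ ≤ K / (1 + s ^ 2))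
    (hb' : ∀ s > (0 : ℝ), ‖ψ' s‖ ≤ K / s) :
    IntegrableOn (fun s => Complex.exp (Complex.I * ((lam * dS r₁ r₂ s : ℝ) : ℂ)) * ψ s)
      (Set.Ioi 0) ∧
    ‖∫ s in Set.Ioi (0 : ℝ), Complex.exp (Complex.I * ((lam * dS r₁ r₂ s : ℝ) : ℂ)) * ψ s‖ ≤
      26 * K * (1 + lam * r₁ * r₂) ^ (-(1 : ℝ) / 2) := by
  set E : ℝ → ℂ := fun s => Complex.exp (Complex.I * ((lam * dS r₁ r₂ s : ℝ) : ℂ)) with hE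
  have hEn : ∀ s, ‖E s‖ = 1 := fun s => by
    rw [hE]; simp only; rw [mul_comm]; exact Complex.norm_exp_ofReal_mul_I _
  have hEc : Continuous E := by
    have := dS_cont r₁ r₂
    rw [hE]; fun_prop
  have hK : 0 ≤ K := by
    have := (norm_nonneg _).trans (hb' 1 one_pos)
    simpa using this
  have hψc : ContinuousOn ψ (Set.Ioi 0) := fun s hs => (hψ s hs).continuousAt.continuousWithinAt
  have hmeas : AEStronglyMeasurable (fun s => E s * ψ s) (volume.restrict (Set.Ioi 0)) :=
    (hEc.continuousOn.mul hψc).aestronglyMeasurable measurableSet_Ioi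
  have hnorm : ∀ s > (0 : ℝ), ‖E s * ψ s‖ ≤ K * (1 + s ^ 2)⁻¹ := fun s hs => by
    rw [norm_mul, hEn, one_mul, ← div_eq_mul_inv]; exact hb s hs
  have hdom : IntegrableOn (fun s : ℝ => K * (1 + s ^ 2)⁻¹) (Set.Ioi 0) :=
    (integrable_inv_one_add_sq.const_mul K).integrableOn
  have hint : IntegrableOn (fun s => E s * ψ s) (Set.Ioi 0) := by
    refine Integrable.mono' hdom hmeas ?_
    exact (ae_restrict_mem measurableSet_Ioi).mono fun s hs => hnorm s hs
  refine ⟨hint, ?_⟩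
  -- trivial bound
  have htriv : ‖∫ s in Set.Ioi (0 : ℝ), E s * ψ s‖ ≤ 2 * K := by
    refine (norm_integral_le_of_norm_le hdom
      ((ae_restrict_mem measurableSet_Ioi).mono fun s hs => hnorm s hs)).trans ?_
    rw [integral_const_mul, integral_Ioi_inv_one_add_sq]
    simp only [Real.arctan_zero, sub_zero]
    nlinarith [Real.pi_lt_four]
  set μ := lam * r₁ * r₂ with hμ
  have hμ0 : 0 < μ := by positivity
  have hpow : (1 + μ) ^ (-(1 : ℝ) / 2) = 1 / Real.sqrt (1 + μ) := by
    rw [neg_div, Real.rpow_neg (by positivity), ← Real.sqrt_eq_rpow, one_div]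
  rw [hpow]
  have hsp : 0 < Real.sqrt (1 + μ) := Real.sqrt_pos.2 (by positivity)
  rcases le_or_gt μ 1 with hle | hgt
  · refine htriv.trans ?_
    have : Real.sqrt (1 + μ) ≤ 2 := by
      apply Real.sqrt_le_iff.2; constructor <;> linarith
    rw [mul_one_div, le_div_iff₀ hsp]
    nlinarith
  -- main bound
  set ε := 1 / Real.sqrt μ with hε
  have hsm : 0 < Real.sqrt μ := Real.sqrt_pos.2 hμ0
  have hε0 : 0 < ε := by positivity
  set F : ℝ → ℂ := fun s => ((dS r₁ r₂ s / Real.sinh s : ℝ) : ℂ) * ψ s with hF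
  set W' : ℝ → ℝ := fun s => ((r₁ * r₂ * Real.sinh s / dS r₁ r₂ s * Real.sinh s -
    dS r₁ r₂ s * Real.cosh s) / Real.sinh s ^ 2) with hW'
  have hFd : ∀ s > (0 : ℝ), HasDerivAt F
      ((W' s : ℂ) * ψ s + ((dS r₁ r₂ s / Real.sinh s : ℝ) : ℂ) * ψ' s) s := fun s hs =>
    (w_hasDeriv h1 h2 hs).ofReal_comp.mul (hψ s hs)
  have hwn : ∀ s > (0 : ℝ), ‖((dS r₁ r₂ s / Real.sinh s : ℝ) : ℂ)‖ ≤ 3 / s := fun s hs => by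
    rw [Complex.norm_real, Real.norm_of_nonneg]
    · exact w_le h1 h2 hR hs
    · have := dS_ge h1 h2 s
      have := Real.sinh_pos_iff.2 hs
      apply div_nonneg <;> linarith
  have hFn : ∀ s > (0 : ℝ), ‖F s‖ ≤ 3 / s * K := fun s hs => by
    rw [hF]; simp only; rw [norm_mul]
    have h3 : K / (1 + s ^ 2) ≤ K := div_le_self hK (by nlinarith)
    have := (hb s hs).trans h3
    have := hwn s hs
    gcongr
  have hFdn : ∀ s > (0 : ℝ), ‖deriv F s‖ ≤ 9 * K * s ^ (-2 : ℝ) := fun s hs => by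
    rw [(hFd s hs).deriv]
    have e1 : ‖(W' s : ℂ)‖ ≤ 3 / s * (3 / 2 + 1 / s) := by
      rw [Complex.norm_real, Real.norm_eq_abs]; exact w_deriv_le h1 h2 hR hs
    have e2 := hb s hs
    have e3 := hb' s hs
    have e4 := hwn s hs
    have hs0 : 0 < s := hs
    calc _ ≤ ‖(W' s : ℂ)‖ * ‖ψ s‖ + ‖((dS r₁ r₂ s / Real.sinh s : ℝ) : ℂ)‖ * ‖ψ' s‖ := by
          refine (norm_add_le _ _).trans ?_
          rw [norm_mul, norm_mul]
      _ ≤ 3 / s * (3 / 2 + 1 / s) * (K / (1 + s ^ 2)) + 3 / s * (K / s) := by gcongr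
      _ = K / s ^ 2 * ((9 / 2 * s + 3) / (1 + s ^ 2) + 3) := by field_simp; ring
      _ ≤ K / s ^ 2 * 9 := by
          gcongr
          have : (9 / 2 * s + 3) / (1 + s ^ 2) ≤ 6 := by
            rw [div_le_iff₀ (by positivity)]
            nlinarith [sq_nonneg (s - 1)]
          linarith
      _ = 9 * K * s ^ (-2 : ℝ) := by
          rw [Real.rpow_neg hs0.le, Real.rpow_two]; field_simp
  have hEd : ∀ s > (0 : ℝ), HasDerivAt E
      (E s * (Complex.I * ((lam * (r₁ * r₂ * Real.sinh s / dS r₁ r₂ s) : ℝ) : ℂ))) s :=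
    fun s _ => ((((dS_hasDeriv h1 h2 s).const_mul lam).ofReal_comp).const_mul Complex.I).cexp
  have hPd : ∀ s > (0 : ℝ), HasDerivAt (fun s => E s * F s)
      (Complex.I * (μ : ℂ) * (E s * ψ s) + E s * deriv F s) s := fun s hs => by
    have hFs := (hFd s hs).differentiableAt.hasDerivAt
    refine ((hEd s hs).mul hFs).congr_deriv ?_
    congr 1
    rw [hF]
    simp only
    have a1 := (Real.sinh_pos_iff.2 hs).ne'
    have a2 : dS r₁ r₂ s ≠ 0 := by have := dS_ge h1 h2 s; intro h; linarith
    have : lam * (r₁ * r₂ * Real.sinh s / dS r₁ r₂ s) * (dS r₁ r₂ s / Real.sinh s) = μ := by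
      rw [hμ]; field_simp
    rw [← this]; push_cast; ring
  have hsub : Set.Ioi ε ⊆ Set.Ioi (0 : ℝ) := Set.Ioi_subset_Ioi hε0.le
  have hI1 : IntegrableOn (fun s => E s * ψ s) (Set.Ioi ε) := hint.mono_set hsub
  have hpowint : IntegrableOn (fun s : ℝ => 9 * K * s ^ (-2 : ℝ)) (Set.Ioi ε) :=
    (integrableOn_Ioi_rpow_of_lt (by norm_num) hε0).const_mul _
  have hnorm2 : ∀ᵐ s ∂(volume.restrict (Set.Ioi ε)), ‖E s * deriv F s‖ ≤ 9 * K * s ^ (-2 : ℝ) :=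
    (ae_restrict_mem measurableSet_Ioi).mono fun s hs => by
      rw [norm_mul, hEn, one_mul]; exact hFdn s (hsub hs)
  have hI2 : IntegrableOn (fun s => E s * deriv F s) (Set.Ioi ε) := by
    refine Integrable.mono' hpowint ?_ hnorm2
    exact hEc.aestronglyMeasurable.mul (stronglyMeasurable_deriv F).aestronglyMeasurable
  have hI2n : ‖∫ s in Set.Ioi ε, E s * deriv F s‖ ≤ 9 * K / ε := by
    refine (norm_integral_le_of_norm_le hpowint hnorm2).trans ?_
    rw [integral_const_mul, integral_Ioi_rpow_of_lt (by norm_num) hε0]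
    norm_num
    rw [Real.rpow_neg hε0.le, Real.rpow_one, div_eq_mul_inv]
  have htend : Filter.Tendsto (fun s => E s * F s) Filter.atTop (nhds 0) := by
    apply squeeze_zero_norm' (a := fun s : ℝ => 3 / s * K)
    · filter_upwards [Filter.eventually_gt_atTop 0] with s hs
      rw [norm_mul, hEn, one_mul]; exact hFn s hs
    · have : Filter.Tendsto (fun s : ℝ => 3 / s) Filter.atTop (nhds 0) :=
        Filter.Tendsto.div_atTop tendsto_const_nhds Filter.tendsto_id
      simpa using this.mul_const K
  have hftc := integral_Ioi_of_hasDerivAt_of_tendsto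
    (hPd ε hε0).continuousAt.continuousWithinAt (fun s hs => hPd s (hsub hs))
    ((hI1.const_mul _).add hI2) htend
  rw [integral_add (hI1.const_mul _) hI2, integral_const_mul] at hftc
  have hIμ : ‖Complex.I * (μ : ℂ) * ∫ s in Set.Ioi ε, E s * ψ s‖ ≤ 12 * K / ε := by
    have : Complex.I * (μ : ℂ) * ∫ s in Set.Ioi ε, E s * ψ s =
      -(E ε * F ε) - ∫ s in Set.Ioi ε, E s * deriv F s := by
      rw [← zero_sub, ← hftc]; ring
    rw [this]
    refine (norm_sub_le _ _).trans ?_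
    rw [norm_neg, norm_mul, hEn, one_mul]
    have a := hFn ε hε0
    have b : 3 / ε * K + 9 * K / ε = 12 * K / ε := by ring
    linarith
  rw [norm_mul, norm_mul, Complex.norm_I, one_mul, Complex.norm_real,
    Real.norm_of_nonneg hμ0.le] at hIμ
  have hsqμ : Real.sqrt μ * Real.sqrt μ = μ := Real.mul_self_sqrt hμ0.le
  have htail : ‖∫ s in Set.Ioi ε, E s * ψ s‖ ≤ 12 * K / Real.sqrt μ := by
    rw [le_div_iff₀ hsm]
    have : 12 * K / ε = 12 * K * Real.sqrt μ := by rw [hε]; field_simp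
    rw [this] at hIμ
    refine le_of_mul_le_mul_right ?_ hsm
    rw [mul_assoc, hsqμ]
    linarith
  have hhead : ‖∫ s in Set.Ioc 0 ε, E s * ψ s‖ ≤ K / Real.sqrt μ := by
    have := norm_setIntegral_le_of_norm_le_const (μ := volume) (s := Set.Ioc 0 ε) (C := K)
      (f := fun s => E s * ψ s) (by simp) (fun s hs => by
        rw [norm_mul, hEn, one_mul]
        exact (hb s hs.1).trans (div_le_self hK (by nlinarith [hs.1])))
    refine this.trans ?_
    rw [Real.volume_real_Ioc_of_le hε0.le, sub_zero, hε, mul_one_div]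
  have hsplit : ∫ s in Set.Ioi (0 : ℝ), E s * ψ s =
      (∫ s in Set.Ioc 0 ε, E s * ψ s) + ∫ s in Set.Ioi ε, E s * ψ s := by
    rw [← setIntegral_union (Set.Ioc_disjoint_Ioi le_rfl) measurableSet_Ioi
      (hint.mono_set Set.Ioc_subset_Ioi_self) hI1, Set.Ioc_union_Ioi_eq_Ioi hε0.le]
  have htot : ‖∫ s in Set.Ioi (0 : ℝ), E s * ψ s‖ ≤ 13 * K / Real.sqrt μ := by
    rw [hsplit]
    refine (norm_add_le _ _).trans ?_
    have : K / Real.sqrt μ + 12 * K / Real.sqrt μ = 13 * K / Real.sqrt μ := by ring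
    linarith
  refine htot.trans ?_
  rw [mul_one_div, div_le_div_iff₀ hsm hsp]
  have : Real.sqrt (1 + μ) ≤ 2 * Real.sqrt μ := by
    apply Real.sqrt_le_iff.2; constructor
    · positivity
    · rw [mul_pow, Real.sq_sqrt hμ0.le]; linarith
  nlinarith

/-! ### the symbol -/

lemma symbol_bounds {δ : ℝ} (hδ : 0 ≤ δ) {a : ℝ → ℂ} (ha : IsSymbol0 a) :
    ∃ K : ℝ, 0 ≤ K ∧ ∀ lam : ℝ, 1 ≤ lam → ∃ A' : ℝ → ℂ,
      (∀ x : ℝ, 3 / 8 ≤ x →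
        HasDerivAt (fun x : ℝ => (((lam⁻¹ + x) ^ (-(3 / 2 + δ)) : ℝ) : ℂ) * a (lam * x)) (A' x) x ∧
        ‖(((lam⁻¹ + x) ^ (-(3 / 2 + δ)) : ℝ) : ℂ) * a (lam * x)‖ ≤ K ∧
        ‖A' x‖ ≤ K / x ∧
        ‖(((lam⁻¹ + x) ^ (-(3 / 2 + δ)) : ℝ) : ℂ) * a (lam * x) -
          ((x ^ (-(3 / 2 + δ)) : ℝ) : ℂ) * a (lam * x)‖ ≤ K / lam) := by
  obtain ⟨hsm, ⟨M, hM⟩, hsy⟩ := ha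
  obtain ⟨C, hC⟩ := hsy 1
  have hM0 : 0 ≤ M := (norm_nonneg _).trans (hM 1 one_pos)
  have hC0 : 0 ≤ C := by
    have := (norm_nonneg _).trans (hC 1 one_pos)
    simpa using this
  have hda : ∀ r > (0 : ℝ), HasDerivAt a (deriv a r) r := fun r hr =>
    ((hsm.differentiableOn (by simp)).differentiableAt (Ioi_mem_nhds hr)).hasDerivAt
  have hdn : ∀ r > (0 : ℝ), ‖deriv a r‖ ≤ C / r := fun r hr => by
    have := hC r hr
    rw [iteratedDerivWithin_one, derivWithin_of_isOpen isOpen_Ioi hr] at this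
    simpa [Real.rpow_neg_one, div_eq_mul_inv] using this
  set p := 3 / 2 + δ with hp
  have hp0 : 0 < p := by linarith
  set P := (3 / 8 : ℝ) ^ (-p) with hP
  have hP0 : 0 < P := by positivity
  have hPy : ∀ y : ℝ, 3 / 8 ≤ y → y ^ (-p) ≤ P := fun y hy =>
    Real.rpow_le_rpow_of_nonpos (by norm_num) hy (by linarith)
  have hPy' : ∀ y x : ℝ, 3 / 8 ≤ x → x ≤ y → |(-p) * y ^ (-p - 1)| ≤ p * P / x := fun y x hx hy => by
    have y0 : 0 < y := by linarith
    have x0 : 0 < x := by linarith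
    rw [abs_mul, abs_neg, abs_of_pos hp0, abs_of_pos (by positivity), Real.rpow_sub_one y0.ne',
      mul_div_assoc]
    have := hPy y (hx.trans hy)
    gcongr
  refine ⟨3 * (p * P * M) + P * C + P * M, by positivity, fun lam hlam => ?_⟩
  have hl0 : 0 < lam := by linarith
  have hli : 0 < lam⁻¹ := by positivity
  refine ⟨fun x => (((-p) * (lam⁻¹ + x) ^ (-p - 1) : ℝ) : ℂ) * a (lam * x) +
    (((lam⁻¹ + x) ^ (-p) : ℝ) : ℂ) * (lam • deriv a (lam * x)), fun x hx => ?_⟩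
  have x0 : 0 < x := by linarith
  have hlx : 0 < lam * x := by positivity
  have hMx := hM _ hlx
  have hPx := hPy (lam⁻¹ + x) (by linarith)
  have hPx' := hPy' (lam⁻¹ + x) x hx (by linarith)
  have hy0 : 0 < lam⁻¹ + x := by linarith
  have hyp : 0 < (lam⁻¹ + x) ^ (-p) := by positivity
  refine ⟨?_, ?_, ?_, ?_⟩
  · have d1 : HasDerivAt (fun x : ℝ => (lam⁻¹ + x) ^ (-p)) ((-p) * (lam⁻¹ + x) ^ (-p - 1)) x := by
      have := ((hasDerivAt_id x).const_add lam⁻¹).rpow_const (p := -p) (Or.inl hy0.ne')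
      refine this.congr_deriv ?_
      simp
    have d2 : HasDerivAt (fun x : ℝ => a (lam * x)) (lam • deriv a (lam * x)) x := by
      have := HasDerivAt.scomp x (hda _ hlx) ((hasDerivAt_id x).const_mul lam)
      simpa [Function.comp_def] using this
    exact d1.ofReal_comp.mul d2
  · rw [norm_mul, Complex.norm_real, Real.norm_of_nonneg hyp.le]
    have : (lam⁻¹ + x) ^ (-p) * ‖a (lam * x)‖ ≤ P * M := by gcongr
    have : 0 ≤ p * P * M := by positivity
    have : 0 ≤ P * C := by positivity
    linarith
  · refine (norm_add_le _ _).trans ?_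
    rw [norm_mul, norm_mul, Complex.norm_real, Complex.norm_real, Real.norm_of_nonneg hyp.le,
      Real.norm_eq_abs, norm_smul, Real.norm_of_nonneg hl0.le]
    have e : lam * ‖deriv a (lam * x)‖ ≤ C / x := by
      have := hdn _ hlx
      calc _ ≤ lam * (C / (lam * x)) := by gcongr
        _ = C / x := by field_simp
    calc _ ≤ p * P / x * M + P * (C / x) := by gcongr
      _ = (p * P * M + P * C) / x := by ring
      _ ≤ _ := by
        refine div_le_div_of_nonneg_right ?_ x0.le
        have : 0 ≤ p * P * M := by positivity
        have : 0 ≤ P * M := by positivity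
        linarith
  · rw [← sub_mul, ← Complex.ofReal_sub, norm_mul, Complex.norm_real]
    have hmv : ‖(lam⁻¹ + x) ^ (-p) - x ^ (-p)‖ ≤ p * P / x * ‖lam⁻¹ + x - x‖ := by
      refine Convex.norm_image_sub_le_of_norm_hasDerivWithin_le (s := Set.Ici x)
        (f := fun y : ℝ => y ^ (-p)) (f' := fun y => (-p) * y ^ (-p - 1))
        (fun y hy => ?_) (fun y hy => ?_) (convex_Ici x) (Set.mem_Ici.2 le_rfl)
        (Set.mem_Ici.2 (by linarith))
      · have y0 : 0 < y := lt_of_lt_of_le x0 hy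
        exact (Real.hasDerivAt_rpow_const (Or.inl y0.ne')).hasDerivWithinAt
      · exact hPy' y x hx hy
    rw [add_sub_cancel_right, Real.norm_of_nonneg hli.le] at hmv
    have h3 : p * P / x ≤ 3 * (p * P) := by
      rw [div_le_iff₀ x0]
      have : 0 < p * P := by positivity
      nlinarith
    calc _ ≤ 3 * (p * P) * lam⁻¹ * M := by
          apply mul_le_mul (hmv.trans _) hMx (norm_nonneg _) (by positivity)
          gcongr
      _ = 3 * (p * P * M) / lam := by ring
      _ ≤ _ := by
        gcongr
        have : 0 ≤ P * C := by positivity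
        have : 0 ≤ P * M := by positivity
        linarith

/-! ### bounds for the amplitude -/

set_option maxHeartbeats 2000000 in
lemma psi_bounds {α Cα : ℝ} (hα : α ∈ Set.Ioo (-1 : ℝ) 1)
    (hCα0 : 0 < Cα)
    (hCα : ∀ s : ℝ, 1 ≤ s → Real.cosh (α * s) ≤ Cα * (Real.cosh s - 1) / (1 + s ^ 2))
    {r₁ r₂ : ℝ} (h1 : 0 < r₁) (h2 : 0 < r₂) (hR1 : 3 / 8 ≤ r₁ + r₂) (hR : r₁ + r₂ ≤ 4 / 3)
    {A A' : ℝ → ℂ} {K : ℝ} (hK : 0 ≤ K)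
    (hA : ∀ x : ℝ, 3 / 8 ≤ x → HasDerivAt A (A' x) x)
    (hAn : ∀ x : ℝ, 3 / 8 ≤ x → ‖A x‖ ≤ K)
    (hAn' : ∀ x : ℝ, 3 / 8 ≤ x → ‖A' x‖ ≤ K / x)
    {σ B : ℝ} (hσ : |σ| ≤ 1) (hB : 0 ≤ B) :
    ∃ ψ' : ℝ → ℂ, ∀ s > (0 : ℝ),
      HasDerivAt (fun s : ℝ => (σ : ℂ) *
        (A (dS r₁ r₂ s) * ((Real.cosh (α * s) : ℝ) : ℂ) * (((Real.cosh s - 1 + B)⁻¹ : ℝ) : ℂ) -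
          A (r₁ + r₂) * (((s ^ 2 / 2 + B)⁻¹ : ℝ) : ℂ))) (ψ' s) s ∧
      ‖(σ : ℂ) *
        (A (dS r₁ r₂ s) * ((Real.cosh (α * s) : ℝ) : ℂ) * (((Real.cosh s - 1 + B)⁻¹ : ℝ) : ℂ) -
          A (r₁ + r₂) * (((s ^ 2 / 2 + B)⁻¹ : ℝ) : ℂ))‖ ≤ K * (50 + 6 * Cα) / (1 + s ^ 2) ∧
      ‖ψ' s‖ ≤ K * (50 + 6 * Cα) / s := by
  set R := r₁ + r₂ with hRdef
  set d := dS r₁ r₂ with hd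
  set D : ℝ → ℝ := fun s => r₁ * r₂ * Real.sinh s / d s with hD
  set U : ℝ → ℂ := fun s => A (d s) * ((Real.cosh (α * s) : ℝ) : ℂ) with hU
  set U' : ℝ → ℂ := fun s => (D s • A' (d s)) * ((Real.cosh (α * s) : ℝ) : ℂ) +
    A (d s) * ((Real.sinh (α * s) * α : ℝ) : ℂ) with hU'
  set g : ℝ → ℝ := fun s => Real.cosh s - 1 + B with hg
  set h : ℝ → ℝ := fun s => s ^ 2 / 2 + B with hh
  have hUd : ∀ s, HasDerivAt U (U' s) s := fun s => by
    have e1 : HasDerivAt (fun s => A (d s)) (D s • A' (d s)) s :=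
      HasDerivAt.scomp s (hA _ (hR1.trans (dS_ge h1 h2 s))) (dS_hasDeriv h1 h2 s)
    have e2 : HasDerivAt (fun s => Real.cosh (α * s)) (Real.sinh (α * s) * α) s := by
      simpa using ((hasDerivAt_id s).const_mul α).cosh
    exact e1.mul e2.ofReal_comp
  have hgh : ∀ s, h s ≤ g s := fun s => by
    have := aux_cosh_lower s
    simp only [hg, hh]; linarith
  have hhp : ∀ s > (0 : ℝ), s ^ 2 / 2 ≤ h s := fun s _ => by simp only [hh]; linarith
  refine ⟨fun s => (σ : ℂ) * ((U' s * (((g s)⁻¹ : ℝ) : ℂ) +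
      U s * ((-Real.sinh s / (g s) ^ 2 : ℝ) : ℂ)) -
      A R * ((-s / (h s) ^ 2 : ℝ) : ℂ)), fun s hs => ?_⟩
  have s0 : 0 < s := hs
  have hs2 := hhp s hs
  have hspos : 0 < s ^ 2 / 2 := by positivity
  have hhs : 0 < h s := by linarith
  have hghs := hgh s
  have hgs : 0 < g s := by linarith
  have hdR : R ≤ d s := dS_ge h1 h2 s
  have hd0 : 0 < d s := by linarith
  have hc1 : 1 ≤ Real.cosh s := Real.one_le_cosh s
  have hca1 : 1 ≤ Real.cosh (α * s) := Real.one_le_cosh _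
  have hsh : 0 < Real.sinh s := Real.sinh_pos_iff.2 hs
  have habs : |α * s| ≤ |s| := by
    rw [abs_mul]
    have : |α| ≤ 1 := (abs_lt.2 hα).le
    nlinarith [abs_nonneg s]
  have hcac : Real.cosh (α * s) ≤ Real.cosh s := Real.cosh_le_cosh.2 habs
  have hsas : |Real.sinh (α * s) * α| ≤ Real.sinh s := by
    have e : |Real.sinh (α * s)| ≤ Real.sinh s := by
      rw [Real.abs_sinh, Real.sinh_le_sinh]
      rwa [abs_of_pos s0] at habs
    rw [abs_mul]
    have : |α| ≤ 1 := (abs_lt.2 hα).le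
    nlinarith [abs_nonneg (Real.sinh (α * s)), abs_nonneg α]
  have hsac : |Real.sinh (α * s) * α| ≤ Real.cosh (α * s) := by
    have e : |Real.sinh (α * s)| ≤ Real.cosh (α * s) := by
      rw [Real.abs_sinh, ← Real.cosh_abs (α * s)]
      exact (Real.sinh_lt_cosh _).le
    rw [abs_mul]
    have : |α| ≤ 1 := (abs_lt.2 hα).le
    nlinarith [abs_nonneg (Real.sinh (α * s)), abs_nonneg α]
  obtain ⟨hD0, hD1, hD2⟩ := dS_deriv_le h1 h2 hR s0.le
  change 0 ≤ D s at hD0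
  change D s ≤ d s / 2 at hD1
  change D s ≤ Real.sinh s / 3 at hD2
  have hAd := hAn (d s) (hR1.trans hdR)
  have hAd' := hAn' (d s) (hR1.trans hdR)
  have hAR := hAn R hR1
  have hgc : Real.cosh s - 1 ≤ g s := by simp only [hg]; linarith
  have hUn : ‖U s‖ ≤ K * Real.cosh (α * s) := by
    simp only [hU]
    rw [norm_mul, Complex.norm_real, Real.norm_of_nonneg (by linarith)]
    gcongr
  have hσn : ∀ z : ℂ, ‖(σ : ℂ) * z‖ ≤ ‖z‖ := fun z => by
    rw [norm_mul, Complex.norm_real, Real.norm_eq_abs]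
    nlinarith [norm_nonneg z]
  have hgi : 0 < (g s)⁻¹ := by positivity
  have hhi : 0 < (h s)⁻¹ := by positivity
  have hgih : (g s)⁻¹ ≤ (h s)⁻¹ := inv_anti₀ hhs hghs
  have hhi2 : (h s)⁻¹ ≤ 2 / s ^ 2 := by
    rw [show 2 / s ^ 2 = (s ^ 2 / 2)⁻¹ by rw [inv_div]]
    exact inv_anti₀ hspos hs2
  have hKC : 0 ≤ K * Cα := by positivity
  have hsmall : s ≤ 1 → ‖U s - A R‖ ≤ 3 * K * (Real.cosh s - 1) ∧
      (h s)⁻¹ - (g s)⁻¹ ≤ 4 ∧ ‖U' s‖ ≤ 3 * K * Real.sinh s := fun hs1 => by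
    obtain ⟨t1, t2, t3, t4, t5⟩ := aux_taylor s0.le hs1
    have hdc := dS_sub h1 h2 hR s
    change d s - R ≤ _ at hdc
    refine ⟨?_, ?_, ?_⟩
    · have hmv : ‖A (d s) - A R‖ ≤ 8 / 3 * K * ‖d s - R‖ := by
        refine Convex.norm_image_sub_le_of_norm_hasDerivWithin_le (s := Set.Ici (3 / 8 : ℝ))
          (f := A) (f' := A') (fun y hy => (hA y hy).hasDerivWithinAt) (fun y hy => ?_)
          (convex_Ici _) hR1 (hR1.trans hdR)
        have hy' : (3 / 8 : ℝ) ≤ y := hy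
        refine (hAn' y hy).trans ?_
        rw [div_le_iff₀ (by linarith)]
        nlinarith
      rw [Real.norm_of_nonneg (by linarith)] at hmv
      have e : U s - A R = (A (d s) - A R) * ((Real.cosh (α * s) : ℝ) : ℂ) +
          A R * ((Real.cosh (α * s) - 1 : ℝ) : ℂ) := by
        simp only [hU]; push_cast; ring
      rw [e]
      refine (norm_add_le _ _).trans ?_
      rw [norm_mul, norm_mul, Complex.norm_real, Complex.norm_real,
        Real.norm_of_nonneg (by linarith), Real.norm_of_nonneg (by linarith)]
      have hx0 : 0 ≤ Real.cosh s - 1 := by linarith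
      calc _ ≤ 8 / 3 * K * ((Real.cosh s - 1) / 3) * 2 + K * (Real.cosh s - 1) := by
            have q1 : Real.cosh (α * s) ≤ 2 := by linarith
            have q2 : ‖A (d s) - A R‖ ≤ 8 / 3 * K * ((Real.cosh s - 1) / 3) :=
              hmv.trans (by gcongr)
            gcongr
        _ ≤ _ := by nlinarith [mul_nonneg hK hx0]
    · have e : (h s)⁻¹ - (g s)⁻¹ = (g s - h s) * ((h s)⁻¹ * (g s)⁻¹) := by field_simp
      have e2 : g s - h s ≤ s ^ 4 := by simp only [hg, hh]; linarith
      rw [e]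
      calc _ ≤ s ^ 4 * (2 / s ^ 2 * (2 / s ^ 2)) := by
            have := hgih.trans hhi2
            gcongr
        _ = 4 := by field_simp; norm_num
    · simp only [hU']
      refine (norm_add_le _ _).trans ?_
      rw [norm_mul, norm_mul, norm_smul, Complex.norm_real, Complex.norm_real,
        Real.norm_of_nonneg hD0, Real.norm_of_nonneg (by linarith), Real.norm_eq_abs]
      have q1 : Real.cosh (α * s) ≤ 2 := by linarith
      have q2 : ‖A' (d s)‖ ≤ 8 / 3 * K := by
        refine hAd'.trans ?_
        rw [div_le_iff₀ (by linarith)]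
        nlinarith
      calc _ ≤ Real.sinh s / 3 * (8 / 3 * K) * 2 + K * Real.sinh s := by gcongr
        _ ≤ _ := by nlinarith [mul_nonneg hK hsh.le]
  have hlarge : 1 ≤ s → Real.cosh (α * s) * (g s)⁻¹ ≤ Cα / (1 + s ^ 2) ∧
      Real.sinh s * (g s)⁻¹ ≤ 3 ∧ ‖U' s‖ ≤ 2 * K * Real.cosh (α * s) := fun hs1 => by
    have hcl := aux_cosh_lower s
    have hlt := Real.sinh_lt_cosh s
    refine ⟨?_, ?_, ?_⟩
    · rw [← div_eq_mul_inv, div_le_iff₀ hgs]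
      refine (hCα s hs1).trans ?_
      rw [mul_div_right_comm]
      gcongr
    · rw [← div_eq_mul_inv, div_le_iff₀ hgs]
      nlinarith
    · simp only [hU']
      refine (norm_add_le _ _).trans ?_
      rw [norm_mul, norm_mul, norm_smul, Complex.norm_real, Complex.norm_real,
        Real.norm_of_nonneg hD0, Real.norm_of_nonneg (by linarith), Real.norm_eq_abs]
      have q : D s * ‖A' (d s)‖ ≤ K := by
        calc _ ≤ d s / 2 * (K / d s) := by gcongr
          _ = K / 2 := by field_simp
          _ ≤ K := by linarith
      calc _ ≤ K * Real.cosh (α * s) + K * Real.cosh (α * s) := by gcongr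
        _ = _ := by ring
  refine ⟨?_, ?_, ?_⟩
  · have d1 : HasDerivAt (fun s => (g s)⁻¹) (-Real.sinh s / (g s) ^ 2) s :=
      (((Real.hasDerivAt_cosh s).sub_const 1).add_const B).inv hgs.ne'
    have d2 : HasDerivAt (fun s => (h s)⁻¹) (-s / (h s) ^ 2) s := by
      have : HasDerivAt h s s := by
        have := ((hasDerivAt_pow 2 s).div_const 2).add_const B
        refine this.congr_deriv ?_
        simp
      exact this.inv hhs.ne'
    exact (((hUd s).mul d1.ofReal_comp).sub (d2.ofReal_comp.const_mul (A R))).const_mul (σ : ℂ)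
  · refine (hσn _).trans ?_
    change ‖U s * (((g s)⁻¹ : ℝ) : ℂ) - A R * (((h s)⁻¹ : ℝ) : ℂ)‖ ≤ _
    rcases le_total s 1 with hs1 | hs1
    · obtain ⟨b1, b2, -⟩ := hsmall hs1
      have e : U s * (((g s)⁻¹ : ℝ) : ℂ) - A R * (((h s)⁻¹ : ℝ) : ℂ) =
          (U s - A R) * (((g s)⁻¹ : ℝ) : ℂ) - A R * (((h s)⁻¹ - (g s)⁻¹ : ℝ) : ℂ) := by
        push_cast; ring
      rw [e]
      refine (norm_sub_le _ _).trans ?_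
      rw [norm_mul, norm_mul, Complex.norm_real, Complex.norm_real,
        Real.norm_of_nonneg hgi.le, Real.norm_of_nonneg (by linarith)]
      have q1 : (Real.cosh s - 1) * (g s)⁻¹ ≤ 1 := by
        rw [← div_eq_mul_inv, div_le_one hgs]; exact hgc
      have q2 : ‖U s - A R‖ * (g s)⁻¹ ≤ 3 * K * 1 := by
        calc _ ≤ 3 * K * (Real.cosh s - 1) * (g s)⁻¹ := by gcongr
          _ = 3 * K * ((Real.cosh s - 1) * (g s)⁻¹) := by ring
          _ ≤ _ := by gcongr
      have q3 : ‖A R‖ * ((h s)⁻¹ - (g s)⁻¹) ≤ K * 4 := by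
        apply mul_le_mul hAR b2 (by linarith) hK
      rw [le_div_iff₀ (by positivity)]
      have q4 : 1 + s ^ 2 ≤ 2 := by nlinarith
      calc _ ≤ (7 * K) * 2 := by
            apply mul_le_mul _ q4 (by positivity) (by positivity)
            linarith
        _ ≤ _ := by nlinarith
    · obtain ⟨b1, -, -⟩ := hlarge hs1
      refine (norm_sub_le _ _).trans ?_
      rw [norm_mul (U s), norm_mul (A R), Complex.norm_real, Complex.norm_real,
        Real.norm_of_nonneg hgi.le, Real.norm_of_nonneg hhi.le]
      have q0 : 2 / s ^ 2 ≤ 4 / (1 + s ^ 2) := by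
        rw [div_le_div_iff₀ (by positivity) (by positivity)]; nlinarith
      calc _ ≤ K * (Real.cosh (α * s) * (g s)⁻¹) + K * (h s)⁻¹ := by
            rw [← mul_assoc]; gcongr
        _ ≤ K * (Cα / (1 + s ^ 2)) + K * (4 / (1 + s ^ 2)) := by
            have := hhi2.trans q0
            gcongr
        _ = K * (4 + Cα) / (1 + s ^ 2) := by ring
        _ ≤ _ := by gcongr <;> linarith
  · refine (hσn _).trans ?_
    have g2 : (g s)⁻¹ ≤ 2 / s ^ 2 := hgih.trans hhi2
    rcases le_total s 1 with hs1 | hs1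
    · obtain ⟨b1, b2, b3⟩ := hsmall hs1
      obtain ⟨t1, t2, t3, t4, t5⟩ := aux_taylor s0.le hs1
      have hss : s ≤ Real.sinh s := Real.self_le_sinh_iff.2 s0.le
      have e : U' s * (((g s)⁻¹ : ℝ) : ℂ) + U s * ((-Real.sinh s / (g s) ^ 2 : ℝ) : ℂ) -
          A R * ((-s / (h s) ^ 2 : ℝ) : ℂ) =
          U' s * (((g s)⁻¹ : ℝ) : ℂ) -
          (U s - A R) * ((Real.sinh s * (g s)⁻¹ * (g s)⁻¹ : ℝ) : ℂ) -
          A R * (((Real.sinh s - s) * (g s)⁻¹ * (g s)⁻¹ : ℝ) : ℂ) +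
          A R * ((s * ((h s)⁻¹ - (g s)⁻¹) * ((h s)⁻¹ + (g s)⁻¹) : ℝ) : ℂ) := by
        rw [div_eq_mul_inv, div_eq_mul_inv, ← inv_pow, ← inv_pow]
        push_cast; ring
      rw [e]
      have n1 : ‖U' s * (((g s)⁻¹ : ℝ) : ℂ)‖ ≤ 12 * K / s := by
        rw [norm_mul, Complex.norm_real, Real.norm_of_nonneg hgi.le]
        calc _ ≤ 3 * K * (2 * s) * (2 / s ^ 2) := by
              have := b3.trans (mul_le_mul_of_nonneg_left t4 (by positivity))
              gcongr
          _ = _ := by field_simp; ring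
      have n2 : ‖(U s - A R) * ((Real.sinh s * (g s)⁻¹ * (g s)⁻¹ : ℝ) : ℂ)‖ ≤ 12 * K / s := by
        rw [norm_mul, Complex.norm_real, Real.norm_of_nonneg (by positivity)]
        calc _ ≤ 3 * K * s ^ 2 * (2 * s * (2 / s ^ 2) * (2 / s ^ 2)) / 2 * 1 := by
              have q1 : (Real.cosh s - 1) * (g s)⁻¹ ≤ 1 := by
                rw [← div_eq_mul_inv, div_le_one hgs]; exact hgc
              calc _ ≤ 3 * K * (Real.cosh s - 1) * (Real.sinh s * (g s)⁻¹ * (g s)⁻¹) := by gcongr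
                _ = 3 * K * Real.sinh s * (g s)⁻¹ * ((Real.cosh s - 1) * (g s)⁻¹) := by ring
                _ ≤ 3 * K * (2 * s) * (2 / s ^ 2) * 1 := by
                    have : 0 ≤ Real.cosh s - 1 := by linarith
                    gcongr
                _ = _ := by field_simp
          _ = _ := by field_simp; ring
      have n3 : ‖A R * (((Real.sinh s - s) * (g s)⁻¹ * (g s)⁻¹ : ℝ) : ℂ)‖ ≤ 4 * K / s := by
        have : 0 ≤ Real.sinh s - s := by linarith
        rw [norm_mul, Complex.norm_real, Real.norm_of_nonneg (by positivity)]
        calc _ ≤ K * (s ^ 3 * (2 / s ^ 2) * (2 / s ^ 2)) := by gcongr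
          _ = _ := by field_simp; ring
      have n4 : ‖A R * ((s * ((h s)⁻¹ - (g s)⁻¹) * ((h s)⁻¹ + (g s)⁻¹) : ℝ) : ℂ)‖ ≤
          16 * K / s := by
        have : 0 ≤ (h s)⁻¹ - (g s)⁻¹ := by linarith
        rw [norm_mul, Complex.norm_real, Real.norm_of_nonneg (by positivity)]
        calc _ ≤ K * (s * 4 * (2 / s ^ 2 + 2 / s ^ 2)) := by gcongr
          _ = _ := by field_simp; ring
      refine (norm_add_le _ _).trans ?_
      refine (add_le_add_left ((norm_sub_le _ _).trans
        (add_le_add_left (norm_sub_le _ _) _)) _).trans ?_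
      calc _ ≤ 12 * K / s + 12 * K / s + 4 * K / s + 16 * K / s := by gcongr
        _ = K * 44 / s := by ring
        _ ≤ _ := by gcongr; linarith
    · obtain ⟨b1, b2, b3⟩ := hlarge hs1
      have b1' : Real.cosh (α * s) * (g s)⁻¹ ≤ Cα / s :=
        b1.trans (by gcongr; nlinarith)
      have n1 : ‖U' s * (((g s)⁻¹ : ℝ) : ℂ)‖ ≤ 2 * K * Cα / s := by
        rw [norm_mul, Complex.norm_real, Real.norm_of_nonneg hgi.le]
        calc _ ≤ 2 * K * Real.cosh (α * s) * (g s)⁻¹ := by gcongr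
          _ = 2 * K * (Real.cosh (α * s) * (g s)⁻¹) := by ring
          _ ≤ 2 * K * (Cα / s) := by gcongr
          _ = _ := by ring
      have n2 : ‖U s * ((-Real.sinh s / (g s) ^ 2 : ℝ) : ℂ)‖ ≤ 3 * K * Cα / s := by
        rw [norm_mul, Complex.norm_real, Real.norm_eq_abs, neg_div, abs_neg,
          abs_of_pos (by positivity)]
        calc _ ≤ K * Real.cosh (α * s) * (Real.sinh s / (g s) ^ 2) := by gcongr
          _ = K * (Real.cosh (α * s) * (g s)⁻¹) * (Real.sinh s * (g s)⁻¹) := by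
              field_simp
          _ ≤ K * (Cα / s) * 3 := by gcongr
          _ = _ := by ring
      have n3 : ‖A R * ((-s / (h s) ^ 2 : ℝ) : ℂ)‖ ≤ 4 * K / s := by
        rw [norm_mul, Complex.norm_real, Real.norm_eq_abs, neg_div, abs_neg,
          abs_of_pos (by positivity)]
        calc _ = ‖A R‖ * (s * (h s)⁻¹ * (h s)⁻¹) := by field_simp
          _ ≤ K * (s * (2 / s ^ 2) * (2 / s ^ 2)) := by gcongr
          _ = 4 * K / (s * s ^ 2) := by field_simp; ring
          _ ≤ _ := by gcongr; nlinarith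
      refine (norm_sub_le _ _).trans ?_
      refine (add_le_add_left (norm_add_le _ _) _).trans ?_
      calc _ ≤ 2 * K * Cα / s + 3 * K * Cα / s + 4 * K / s := by gcongr
        _ = K * (4 + 5 * Cα) / s := by ring
        _ ≤ _ := by gcongr <;> linarith

/-! ### the singular term -/

lemma poisson_bound {b : ℝ} (hb : 0 < b) :
    IntegrableOn (fun s : ℝ => (s ^ 2 / 2 + 2 * b ^ 2)⁻¹) (Set.Ioi 0) ∧
    ∫ s in Set.Ioi (0 : ℝ), (s ^ 2 / 2 + 2 * b ^ 2)⁻¹ = Real.pi / (2 * b) := by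
  have hk : 0 < (2 * b)⁻¹ := by positivity
  have e : (fun s : ℝ => (s ^ 2 / 2 + 2 * b ^ 2)⁻¹) =
      fun s => (2 * b ^ 2)⁻¹ * (1 + ((2 * b)⁻¹ * s) ^ 2)⁻¹ := by
    funext s
    rw [← mul_inv]
    congr 1
    field_simp
    ring
  have hi : IntegrableOn (fun s : ℝ => (1 + ((2 * b)⁻¹ * s) ^ 2)⁻¹) (Set.Ioi 0) :=
    (integrable_inv_one_add_sq.comp_mul_left' hk.ne').integrableOn
  rw [e]
  refine ⟨hi.const_mul _, ?_⟩
  rw [integral_const_mul, integral_comp_mul_left_Ioi (fun x : ℝ => (1 + x ^ 2)⁻¹) 0 hk]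
  rw [mul_zero, integral_Ioi_inv_one_add_sq]
  simp only [Real.arctan_zero, sub_zero, smul_eq_mul]
  field_simp

theorem stmt9 (δ : ℝ) (hδ : 0 ≤ δ) (a : ℝ → ℂ) (ha : IsSymbol0 a)
    (β : ℝ → ℝ) (hβ : ContDiff ℝ (⊤ : ℕ∞) β)
    (hβs : Function.support β ⊆ Set.Icc (3 / 8) (4 / 3))
    (α : ℝ) (hα : α ∈ Set.Ioo (-1 : ℝ) 1) (hα0 : α ≠ 0) :
    ∃ C : ℝ, ∀ (j : ℕ), 1 ≤ j → ∀ r₁ r₂ : ℝ, 0 < r₁ → 0 < r₂ →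
      ∀ θ₁ ∈ Set.Ico (0 : ℝ) (2 * Real.pi), ∀ θ₂ ∈ Set.Ico (0 : ℝ) (2 * Real.pi),
        ‖Ktil3e δ α a β j r₁ r₂ (θ₁ - θ₂)‖ ≤
          C * (2 : ℝ) ^ (-(j : ℝ) * (3 / 2 + δ)) *
            (1 + (2 : ℝ) ^ (j : ℝ) * r₁ * r₂) ^ (-(1 : ℝ) / 2) := by
  obtain ⟨K, hK, hsym⟩ := symbol_bounds hδ ha
  obtain ⟨Cα, hCα0, hCα⟩ := aux_decay hα
  obtain ⟨Mβ, hMβ⟩ : ∃ M : ℝ, ∀ x ∈ Set.Icc (3 / 8 : ℝ) (4 / 3), ‖β x‖ ≤ M :=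
    isCompact_Icc.exists_bound_of_continuousOn hβ.continuous.continuousOn
  have hMβ0 : 0 ≤ Mβ := (norm_nonneg _).trans (hMβ 1 (by norm_num))
  refine ⟨Mβ * (26 * (K * (50 + 6 * Cα)) + 8 * K), fun j _ r₁ r₂ h1 h2 θ₁ _ θ₂ _ => ?_⟩
  set p := (2 : ℝ) ^ (-(j : ℝ) * (3 / 2 + δ)) with hp
  have hp0 : 0 < p := by positivity
  have hlneg : (2 : ℝ) ^ (-(j : ℝ)) = ((2 : ℝ) ^ (j : ℝ))⁻¹ := Real.rpow_neg (by norm_num) _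
  unfold Ktil3e
  rw [← hp]
  simp only [psi3, psi3m, hlneg]
  set lam := (2 : ℝ) ^ (j : ℝ) with hlamdef
  have hlam : 1 ≤ lam := Real.one_le_rpow (by norm_num) (by positivity)
  have hl0 : 0 < lam := by linarith
  have hμ0 : 0 < lam * r₁ * r₂ := by positivity
  set Q := (1 + lam * r₁ * r₂) ^ (-(1 : ℝ) / 2) with hQ
  have hQ0 : 0 < Q := by positivity
  by_cases hmem : r₁ + r₂ ∈ Set.Icc (3 / 8 : ℝ) (4 / 3)
  swap
  · have : β (r₁ + r₂) = 0 := by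
      by_contra hne
      exact hmem (hβs hne)
    rw [this]
    simp only [Complex.ofReal_zero, mul_zero, zero_mul, norm_zero]
    positivity
  obtain ⟨hR1, hR⟩ := hmem
  obtain ⟨A', hA⟩ := hsym lam hlam
  set A : ℝ → ℂ := fun x => (((lam⁻¹ + x) ^ (-(3 / 2 + δ)) : ℝ) : ℂ) * a (lam * x) with hAdef
  set ϑ := θ₁ - θ₂ + Real.pi with hϑ
  set b := Real.sin (ϑ / 2) with hb
  set σ := Real.sin ϑ with hσdef
  have hσb : |σ| ≤ 2 * |b| := by
    have : σ = 2 * b * Real.cos (ϑ / 2) := by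
      rw [hσdef, hb, ← Real.sin_two_mul]; congr 1; ring
    rw [this, abs_mul, abs_mul, abs_two]
    have := Real.abs_cos_le_one (ϑ / 2)
    have := abs_nonneg b
    nlinarith
  have hcos : Real.cos ϑ = 1 - 2 * b ^ 2 := by
    have := Real.cos_two_mul' (ϑ / 2)
    have h3 := Real.sin_sq_add_cos_sq (ϑ / 2)
    rw [mul_div_cancel₀ ϑ two_ne_zero] at this
    rw [this, hb]; linarith
  set B := 2 * b ^ 2 with hB
  have hB0 : 0 ≤ B := by positivity
  obtain ⟨ψ', hψ⟩ := psi_bounds hα hCα0 hCα h1 h2 hR1 hR hK (fun x hx => (hA x hx).1)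
    (fun x hx => (hA x hx).2.1) (fun x hx => (hA x hx).2.2.1) (Real.abs_sin_le_one ϑ) hB0
  obtain ⟨hint, hbd⟩ := vdc h1 h2 hR hl0 _ ψ' (fun s hs => (hψ s hs).1)
    (fun s hs => (hψ s hs).2.1) (fun s hs => (hψ s hs).2.2)
  set E : ℝ → ℂ := fun s => Complex.exp (Complex.I * ((lam * dS r₁ r₂ s : ℝ) : ℂ)) with hE
  set ψ : ℝ → ℂ := fun s : ℝ => (σ : ℂ) *
        (A (dS r₁ r₂ s) * ((Real.cosh (α * s) : ℝ) : ℂ) * (((Real.cosh s - 1 + B)⁻¹ : ℝ) : ℂ) -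
          A (r₁ + r₂) * (((s ^ 2 / 2 + B)⁻¹ : ℝ) : ℂ)) with hψdef
  change IntegrableOn (fun s => E s * ψ s) (Set.Ioi 0) at hint
  change ‖∫ s in Set.Ioi (0 : ℝ), E s * ψ s‖ ≤ _ at hbd
  set c : ℂ := A (r₁ + r₂) - (((r₁ + r₂) ^ (-(3 / 2 + δ)) : ℝ) : ℂ) * a (lam * (r₁ + r₂)) with hc
  have hcn : ‖c‖ ≤ K / lam := (hA _ hR1).2.2.2
  have hEn : ∀ s, ‖E s‖ = 1 := fun s => by
    rw [hE]; simp only; rw [mul_comm]; exact Complex.norm_exp_ofReal_mul_I _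
  have hEc : Continuous E := by
    have := dS_cont r₁ r₂
    rw [hE]; fun_prop
  set G : ℝ → ℂ := fun s => E s * (((σ * (s ^ 2 / 2 + B)⁻¹ : ℝ) : ℂ)) with hG
  have hGb : IntegrableOn G (Set.Ioi 0) ∧ ‖∫ s in Set.Ioi (0 : ℝ), G s‖ ≤ 4 := by
    by_cases hb0 : b = 0
    · have hσ0 : σ = 0 := by
        rw [hb0] at hσb
        simpa using hσb
      have : G = fun _ => 0 := by funext s; simp [hG, hσ0]
      rw [this]; simp
    · have hbp : 0 < |b| := abs_pos.2 hb0
      obtain ⟨i1, i2⟩ := poisson_bound hbp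
      simp only [sq_abs] at i1 i2
      have hdom := i1.const_mul (2 * |b|)
      have hn : ∀ s, ‖G s‖ ≤ 2 * |b| * (s ^ 2 / 2 + 2 * b ^ 2)⁻¹ := fun s => by
        simp only [hG]
        have : 0 ≤ (s ^ 2 / 2 + B)⁻¹ := by positivity
        rw [norm_mul, hEn, one_mul, Complex.norm_real, Real.norm_eq_abs, abs_mul, abs_of_nonneg this]
        gcongr
      have hBp : 0 < B := by rw [hB, ← sq_abs]; positivity
      have hGc : Continuous G := by
        have : Continuous fun s : ℝ => σ * (s ^ 2 / 2 + B)⁻¹ :=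
          continuous_const.mul (Continuous.inv₀ (by fun_prop) (fun s => by positivity))
        exact hEc.mul (Complex.continuous_ofReal.comp this)
      refine ⟨Integrable.mono' hdom hGc.aestronglyMeasurable (Filter.Eventually.of_forall hn), ?_⟩
      refine (norm_integral_le_of_norm_le hdom (Filter.Eventually.of_forall hn)).trans ?_
      rw [integral_const_mul, i2]
      have : 2 * |b| * (Real.pi / (2 * |b|)) = Real.pi := by field_simp
      rw [this]; exact Real.pi_lt_four.le
  have hmain : (∫ s in Set.Ioi (0 : ℝ),
      E s *
        ((((lam⁻¹ + dS r₁ r₂ s) ^ (-(3 / 2 + δ)) : ℝ) : ℂ) * a (lam * dS r₁ r₂ s) *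
          ((σ * Real.cosh (α * s) / (Real.cosh s - Real.cos ϑ) : ℝ) : ℂ) -
        (((r₁ + r₂) ^ (-(3 / 2 + δ)) : ℝ) : ℂ) * a (lam * (r₁ + r₂)) *
          ((σ / (s ^ 2 / 2 + B) : ℝ) : ℂ))) =
      (∫ s in Set.Ioi (0 : ℝ), E s * ψ s) + c * ∫ s in Set.Ioi (0 : ℝ), G s := by
    rw [← integral_const_mul, ← integral_add hint (hGb.1.const_mul c)]
    congr 1
    funext s
    have e1 : Real.cosh s - Real.cos ϑ = Real.cosh s - 1 + B := by rw [hcos]; ring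
    rw [e1]
    simp only [hψdef, hG, hc, hAdef, div_eq_mul_inv]
    push_cast
    ring
  have hQl : 1 / lam ≤ 2 * Q := by
    have hpow : Q = 1 / Real.sqrt (1 + lam * r₁ * r₂) := by
      rw [hQ, neg_div, Real.rpow_neg (by positivity), ← Real.sqrt_eq_rpow, one_div]
    have hsp : 0 < Real.sqrt (1 + lam * r₁ * r₂) := Real.sqrt_pos.2 (by positivity)
    rw [hpow, mul_one_div, div_le_div_iff₀ hl0 hsp, one_mul]
    apply Real.sqrt_le_iff.2
    refine ⟨by positivity, ?_⟩
    have hpr := @aux_prod r₁ r₂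
    have : r₁ * r₂ ≤ 1 := by nlinarith
    have : lam * (r₁ * r₂) ≤ lam * 1 := by gcongr
    nlinarith
  have hfin : ‖(∫ s in Set.Ioi (0 : ℝ), E s * ψ s) + c * ∫ s in Set.Ioi (0 : ℝ), G s‖ ≤
      (26 * (K * (50 + 6 * Cα)) + 8 * K) * Q := by
    refine (norm_add_le _ _).trans ?_
    rw [norm_mul]
    calc _ ≤ 26 * (K * (50 + 6 * Cα)) * Q + K / lam * 4 := by
          have := hGb.2
          gcongr
      _ = 26 * (K * (50 + 6 * Cα)) * Q + 4 * K * (1 / lam) := by ring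
      _ ≤ 26 * (K * (50 + 6 * Cα)) * Q + 4 * K * (2 * Q) := by gcongr
      _ = _ := by ring
  rw [norm_mul, norm_mul, Complex.norm_real, Complex.norm_real, Real.norm_of_nonneg hp0.le]
  have hβn := hMβ _ ⟨hR1, hR⟩
  calc _ ≤ p * Mβ * ((26 * (K * (50 + 6 * Cα)) + 8 * K) * Q) := by
        refine mul_le_mul (by gcongr) ?_ (norm_nonneg _) (by positivity)
        refine le_trans (le_of_eq ?_) hfin
        rw [← hmain]
    _ = _ := by ring

end
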